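/- θ(1) = π^{1/4}/Γ(3/4), where θ(t) = 1 + 2Σ_{n≥1} e^{-πn²t}. -/

import Mathlib

/-- The Jacobi theta function `θ(t) = ∑_{n ∈ ℤ} e^{-π n² t}` for real `t`. -/
noncomputable def theta (t : ℝ) : ℝ := ∑' n : ℤ, Real.exp (-Real.pi * (n : ℝ)^2 * t)

open Real MeasureTheory Filter Topology Set

lemma theta_ofReal (t : ℝ) : ((theta t : ℝ) : ℂ) = jacobiTheta (Complex.I * t) := by
  unfold theta jacobiTheta
  push_cast
  refine tsum_congr fun n => ?_
  congr 1
  linear_combination (-(π:ℂ) * n^2 * t) * Complex.I_sq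

lemma theta_summable {t : ℝ} (ht : 0 < t) :
    Summable (fun n : ℤ => Real.exp (-Real.pi * (n : ℝ)^2 * t)) := by
  have := (hasSum_jacobiTheta₂_term 0 (τ := Complex.I * t) (by simpa using ht)).summable.norm
  refine this.congr fun n => ?_
  rw [jacobiTheta₂_term, Complex.norm_exp]
  congr 1
  rw [show (2 * (π:ℂ) * Complex.I * n * 0 + π * Complex.I * n^2 * (Complex.I * t)) =
    ((-π * n^2 * t : ℝ) : ℂ) by push_cast; linear_combination ((π:ℂ) * n^2 * t) * Complex.I_sq]
  exact Complex.ofReal_re _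

lemma theta_tendsto : Tendsto theta atTop (𝓝 1) := by
  have h : Tendsto (fun t : ℝ => jacobiTheta (Complex.I * t) - 1) atTop (𝓝 0) := by
    have h1 : Tendsto (fun t : ℝ => Complex.I * (t:ℂ)) atTop (comap Complex.im atTop) := by
      rw [tendsto_comap_iff]
      refine tendsto_id.congr fun t => by simp
    have h2 := isBigO_at_im_infty_jacobiTheta_sub_one.comp_tendsto h1
    refine h2.trans_tendsto ?_
    refine Real.tendsto_exp_atBot.comp ?_
    simp only [Complex.mul_im, Complex.I_re, Complex.I_im, Complex.ofReal_re, Complex.ofReal_im]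
    simp only [mul_zero, one_mul, zero_add]
    exact tendsto_id.const_mul_atTop_of_neg (by linarith [pi_pos])
  have h3 : Tendsto (fun t : ℝ => (jacobiTheta (Complex.I * t)).re) atTop (𝓝 1) := by
    have := (Complex.continuous_re.tendsto _).comp (h.add_const 1)
    simpa [Function.comp_def] using this
  refine h3.congr fun t => ?_
  rw [← theta_ofReal, Complex.ofReal_re]

lemma theta_pos {t : ℝ} (ht : 0 < t) : 0 < theta t :=
  (theta_summable ht).tsum_pos (fun _ => (exp_pos _).le) 0 (exp_pos _)

lemma theta_half : theta (1/2) = √2 * theta 2 := by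
  have h := Real.tsum_exp_neg_mul_int_sq (a := 1/2) (by norm_num)
  have e1 : theta (1/2) = ∑' n : ℤ, exp (-π * (1/2) * (n : ℝ) ^ 2) :=
    tsum_congr fun n => by congr 1; ring
  have e2 : theta 2 = ∑' n : ℤ, exp (-π / (1/2) * (n : ℝ) ^ 2) :=
    tsum_congr fun n => by congr 1; ring
  rw [e1, e2, h, ← Real.sqrt_eq_rpow]
  congr 1
  rw [Real.sqrt_div (by norm_num)]; simp

/-- odd part -/
noncomputable def thetaOdd (t : ℝ) : ℝ := ∑' n : ℤ, Real.exp (-Real.pi * (2 * (n : ℝ) + 1)^2 * t)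

lemma thetaOdd_summable {t : ℝ} (ht : 0 < t) :
    Summable (fun n : ℤ => Real.exp (-Real.pi * (2 * (n : ℝ) + 1)^2 * t)) := by
  have := (theta_summable ht).comp_injective (i := fun n : ℤ => 2 * n + 1) (fun a b h => by simpa using h)
  refine this.congr fun n => by simp

noncomputable def eqv1 : ℤ ⊕ ℤ ≃ ℤ := Equiv.ofBijective
  (Sum.elim (fun n => 2 * n) (fun n => 2 * n + 1)) (by
    constructor
    · rintro (a | a) (b | b) h <;> simp at h ⊢ <;> omega
    · intro n
      obtain ⟨k, rfl | rfl⟩ := Int.even_or_odd' n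
      · exact ⟨Sum.inl k, rfl⟩
      · exact ⟨Sum.inr k, rfl⟩)

noncomputable def eqv2 : (ℤ × ℤ) ⊕ (ℤ × ℤ) ≃ ℤ × ℤ := Equiv.ofBijective
  (Sum.elim (fun n => (n.1 + n.2, n.1 - n.2)) (fun n => (n.1 + n.2 + 1, n.1 - n.2))) (by
    constructor
    · rintro (⟨a, b⟩ | ⟨a, b⟩) (⟨c, d⟩ | ⟨c, d⟩) h <;> simp at h ⊢ <;> omega
    · rintro ⟨u, v⟩
      obtain ⟨k, h | h⟩ := Int.even_or_odd' (u + v)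
      · exact ⟨Sum.inl (k, u - k), by simp; omega⟩
      · exact ⟨Sum.inr (k, u - k - 1), by simp; omega⟩)

lemma eqv1_inl (n : ℤ) : eqv1 (Sum.inl n) = 2 * n := rfl
lemma eqv1_inr (n : ℤ) : eqv1 (Sum.inr n) = 2 * n + 1 := rfl
lemma eqv2_inl (n : ℤ × ℤ) : eqv2 (Sum.inl n) = (n.1 + n.2, n.1 - n.2) := rfl
lemma eqv2_inr (n : ℤ × ℤ) : eqv2 (Sum.inr n) = (n.1 + n.2 + 1, n.1 - n.2) := rfl

lemma theta_split {t : ℝ} (ht : 0 < t) : theta t = theta (4 * t) + thetaOdd t := by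
  have h1 : HasSum _ (theta (4 * t)) := (theta_summable (t := 4 * t) (by linarith)).hasSum
  have h2 : HasSum _ (thetaOdd t) := (thetaOdd_summable ht).hasSum
  have h3 := (eqv1.hasSum_iff (f := fun n : ℤ => Real.exp (-Real.pi * (n : ℝ)^2 * t))).1
    (HasSum.sum (a := theta (4*t)) (b := thetaOdd t) ?_ ?_)
  · exact h3.tsum_eq
  · convert! h1 using 1
    funext n
    simp only [Function.comp_apply, eqv1_inl]
    congr 1; push_cast; ring
  · convert! h2 using 1
    funext n
    simp only [Function.comp_apply, eqv1_inr]
    congr 1; push_cast; ring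

lemma theta_sq {t : ℝ} (ht : 0 < t) : theta (2 * t) ^ 2 = theta (4 * t) ^ 2 + thetaOdd t ^ 2 := by
  have s0 := theta_summable (t := 2 * t) (by linarith)
  have s1 := theta_summable (t := 4 * t) (by linarith)
  have s2 := thetaOdd_summable ht
  have m0 := s0.hasSum.mul s0.hasSum (s0.mul_of_nonneg s0 (fun _ => (exp_pos _).le) (fun _ => (exp_pos _).le))
  have m1 := s1.hasSum.mul s1.hasSum (s1.mul_of_nonneg s1 (fun _ => (exp_pos _).le) (fun _ => (exp_pos _).le))
  have m2 := s2.hasSum.mul s2.hasSum (s2.mul_of_nonneg s2 (fun _ => (exp_pos _).le) (fun _ => (exp_pos _).le))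
  rw [sq, sq, sq]
  refine HasSum.unique m0 ((eqv2.hasSum_iff).1 (HasSum.sum ?_ ?_))
  · convert! m1 using 1
    funext n
    simp only [Function.comp_apply, eqv2_inl]
    rw [← exp_add, ← exp_add]
    congr 1; push_cast; ring
  · convert! m2 using 1
    funext n
    simp only [Function.comp_apply, eqv2_inr]
    rw [← exp_add, ← exp_add]
    congr 1; push_cast; ring

noncomputable def theta4 (t : ℝ) : ℝ := 2 * theta (4 * t) - theta t

lemma theta4_add {t : ℝ} (ht : 0 < t) : theta t ^ 2 + theta4 t ^ 2 = 2 * theta (2 * t) ^ 2 := by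
  rw [theta_sq ht, theta4, theta_split ht]; ring

lemma theta4_mul {t : ℝ} (ht : 0 < t) : theta t * theta4 t = theta4 (2 * t) ^ 2 := by
  have h1 := theta4_add ht
  have h2 := theta4_add (t := 2 * t) (by linarith)
  rw [show 2 * (2 * t) = 4 * t by ring] at h2
  have h3 : theta4 t = 2 * theta (4 * t) - theta t := rfl
  rw [h3] at h1 ⊢
  nlinarith

lemma theta4_one : theta 1 ^ 2 = √2 * theta4 1 ^ 2 := by
  have h1 := theta4_add (t := 1/2) (by norm_num)
  have h2 := theta4_add (t := 1) (by norm_num)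
  have h3 := theta4_mul (t := 1/2) (by norm_num)
  rw [show (2:ℝ) * (1/2) = 1 by norm_num] at h1 h3
  rw [show (2:ℝ) * 1 = 2 by norm_num] at h2
  have h4 := theta_half
  have h5 : theta (1/2) ^ 2 = theta 1 ^ 2 + theta4 1 ^ 2 := by
    rw [h4, mul_pow, Real.sq_sqrt (by norm_num), h2]
  have h6 : theta4 (1/2) ^ 2 = theta 1 ^ 2 - theta4 1 ^ 2 := by linarith
  have h7 : (theta 1 ^ 2) ^ 2 = (√2 * theta4 1 ^ 2) ^ 2 := by
    rw [mul_pow, Real.sq_sqrt (by norm_num)]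
    have : theta (1/2) ^ 2 * theta4 (1/2) ^ 2 = (theta4 1 ^ 2) ^ 2 := by rw [← h3]; ring
    rw [h5, h6] at this
    linarith
  exact (pow_left_inj₀ (by positivity) (by positivity) two_ne_zero).1 h7

noncomputable def agmJ (a b : ℝ) : ℝ := ∫ x : ℝ, (√((x^2+a^2)*(x^2+b^2)))⁻¹

lemma agmJ_half (a b : ℝ) : agmJ a b = 2 * ∫ x in Ioi (0:ℝ), (√((x^2+a^2)*(x^2+b^2)))⁻¹ := by
  rw [← integral_comp_abs (f := fun x => (√((x^2+a^2)*(x^2+b^2)))⁻¹)]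
  simp only [sq_abs]; rfl

lemma agmJ_landen {a b m g : ℝ} (ha : 0 < a) (hb : 0 < b) (hm : m = (a + b) / 2)
    (hg : g ^ 2 = a * b) : agmJ m g = agmJ a b := by
  have hc : 0 < a * b := mul_pos ha hb
  have himg : (fun t : ℝ => (t - a * b / t) / 2) '' Ioi 0 = univ := by
    refine eq_univ_of_forall fun u => ?_
    have hs : √(u^2 + a*b) ^ 2 = u^2 + a * b := Real.sq_sqrt (by positivity)
    have hlt : |u| < √(u^2 + a*b) := by
      rw [← Real.sqrt_sq_eq_abs]; exact Real.sqrt_lt_sqrt (sq_nonneg _) (by linarith)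
    have hpos : 0 < u + √(u^2+a*b) := by linarith [neg_abs_le u]
    refine ⟨u + √(u^2+a*b), hpos, ?_⟩
    simp only
    field_simp
    nlinarith
  have hinj : InjOn (fun t : ℝ => (t - a * b / t) / 2) (Ioi 0) := by
    intro t ht s hs h
    simp only [mem_Ioi] at ht hs h
    field_simp at h
    have : (t - s) * (t * s + a * b) = 0 := by linarith
    rcases mul_eq_zero.1 this with h | h
    · linarith
    · nlinarith [mul_pos ht hs]
  have hder : ∀ x ∈ Ioi (0:ℝ), HasDerivWithinAt (fun t : ℝ => (t - a * b / t) / 2)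
      ((1 + a * b / x^2) / 2) (Ioi 0) x := by
    intro x hx
    have hx0 : x ≠ 0 := (mem_Ioi.1 hx).ne'
    have h1 := (((hasDerivAt_id x).sub ((hasDerivAt_inv hx0).const_mul (a*b))).div_const 2)
    refine HasDerivAt.hasDerivWithinAt ?_
    convert! h1 using 1
    field_simp
    ring
  have key := integral_image_eq_integral_abs_deriv_smul measurableSet_Ioi hder hinj
    (fun x => (√((x^2+m^2)*(x^2+g^2)))⁻¹)
  rw [himg, setIntegral_univ] at key
  rw [agmJ_half a b, agmJ, key, ← integral_const_mul]
  refine setIntegral_congr_fun measurableSet_Ioi fun t ht => ?_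
  have ht : 0 < t := ht
  simp only [smul_eq_mul]
  have e : ((((t - a * b / t) / 2)^2+m^2)*(((t - a * b / t) / 2)^2+g^2)) =
      ((t^2 + a * b) / (4 * t^2))^2 * ((t^2+a^2)*(t^2+b^2)) := by
    rw [hg, hm]; field_simp; ring
  rw [e, Real.sqrt_mul (by positivity), Real.sqrt_sq (by positivity), abs_of_pos (by positivity)]
  have : 0 < √((t^2+a^2)*(t^2+b^2)) := by positivity
  field_simp
  ring

lemma agmJ_mul {c : ℝ} (hc : 0 < c) (a b : ℝ) : agmJ (c * a) (c * b) = c⁻¹ * agmJ a b := by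
  have h := Measure.integral_comp_mul_left (fun x : ℝ => (√((x^2+(c*a)^2)*(x^2+(c*b)^2)))⁻¹) c
  rw [abs_of_pos (by positivity), smul_eq_mul] at h
  have h2 : ∀ x : ℝ, (√(((c*x)^2+(c*a)^2)*((c*x)^2+(c*b)^2)))⁻¹ = (c^2)⁻¹ * (√((x^2+a^2)*(x^2+b^2)))⁻¹ := by
    intro x
    rw [show ((c*x)^2+(c*a)^2)*((c*x)^2+(c*b)^2) = (c^2)^2 * ((x^2+a^2)*(x^2+b^2)) by ring,
      Real.sqrt_mul (by positivity), Real.sqrt_sq (by positivity), mul_inv]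
  simp_rw [h2] at h
  rw [integral_const_mul] at h
  change _ * agmJ a b = c⁻¹ * agmJ (c*a) (c*b) at h
  field_simp at h ⊢
  linarith

lemma agmJ_one_one : agmJ 1 1 = π := by
  rw [← integral_univ_inv_one_add_sq, agmJ]
  congr 1; ext x
  rw [one_pow, ← sq, Real.sqrt_sq (by positivity), add_comm]

lemma agmJ_self {c : ℝ} (hc : 0 < c) : agmJ c c = π / c := by
  have := agmJ_mul hc 1 1
  rw [mul_one, agmJ_one_one] at this
  rw [this]; ring

lemma agmJ_integrable {a b : ℝ} (ha : 0 < a) (hb : 0 < b) :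
    Integrable (fun x : ℝ => (√((x^2+a^2)*(x^2+b^2)))⁻¹) := by
  have hcont : Continuous (fun x : ℝ => (√((x^2+a^2)*(x^2+b^2)))⁻¹) := by
    refine Continuous.inv₀ (by fun_prop) fun x => ?_
    positivity
  obtain ⟨c, hc, hca, hcb⟩ : ∃ c : ℝ, 0 < c ∧ c ≤ 1 ∧ c ≤ a ^ 2 ∧ c ≤ b ^ 2 :=
    ⟨min 1 (min (a^2) (b^2)), by positivity, by simp, by simp, by simp⟩
  refine (integrable_inv_one_add_sq.const_mul c⁻¹).mono' hcont.aestronglyMeasurable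
    (Eventually.of_forall fun x => ?_)
  rw [Real.norm_of_nonneg (by positivity), ← mul_inv]
  refine inv_anti₀ (by positivity) (Real.le_sqrt_of_sq_le ?_)
  rw [sq]
  have h : c * (1 + x^2) ≤ x^2 + a^2 := by nlinarith [sq_nonneg x]
  have h' : c * (1 + x^2) ≤ x^2 + b^2 := by nlinarith [sq_nonneg x]
  exact mul_le_mul h h' (by positivity) (by positivity)

lemma agmJ_anti {a b c d : ℝ} (ha : 0 < a) (hb : 0 < b) (hac : a ≤ c) (hbd : b ≤ d) :
    agmJ c d ≤ agmJ a b := by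
  refine integral_mono (agmJ_integrable (by linarith) (by linarith)) (agmJ_integrable ha hb) fun x => ?_
  refine inv_anti₀ (by positivity) (Real.sqrt_le_sqrt ?_)
  gcongr

lemma agmJ_tendsto {u v : ℕ → ℝ} (hu : Tendsto u atTop (𝓝 1)) (hv : Tendsto v atTop (𝓝 1)) :
    Tendsto (fun n => agmJ (u n) (v n)) atTop (𝓝 π) := by
  have h1 : Tendsto (fun n => π / min (u n) (v n)) atTop (𝓝 π) := by
    simpa [Pi.div_def] using (tendsto_const_nhds (x := π)).div (hu.min hv) (by simp)
  have h2 : Tendsto (fun n => π / max (u n) (v n)) atTop (𝓝 π) := by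
    simpa [Pi.div_def] using (tendsto_const_nhds (x := π)).div (hu.max hv) (by simp)
  refine tendsto_of_tendsto_of_tendsto_of_le_of_le' h2 h1 ?_ ?_
  all_goals
    filter_upwards [hu.eventually (lt_mem_nhds one_pos), hv.eventually (lt_mem_nhds one_pos)] with n hn hn'
  · rw [← agmJ_self (by positivity)]
    exact agmJ_anti hn hn' (le_max_left _ _) (le_max_right _ _)
  · rw [← agmJ_self (by positivity)]
    exact agmJ_anti (by positivity) (by positivity) (min_le_left _ _) (min_le_right _ _)

lemma beta_real {p q : ℝ} (hp : 0 < p) (hq : 0 < q) :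
    ∫ x in Ioo (0:ℝ) 1, x ^ (p - 1) * (1 - x) ^ (q - 1) = Gamma p * Gamma q / Gamma (p + q) := by
  have h := ProbabilityTheory.beta_eq_betaIntegralReal p q hp hq
  rw [ProbabilityTheory.beta, Complex.betaIntegral, intervalIntegral.integral_of_le zero_le_one,
    integral_Ioc_eq_integral_Ioo] at h
  rw [h]
  have : ∫ x in Ioo (0:ℝ) 1, (x:ℂ) ^ ((p:ℂ) - 1) * (1 - (x:ℂ)) ^ ((q:ℂ) - 1) =
      ∫ x in Ioo (0:ℝ) 1, ((x ^ (p - 1) * (1 - x) ^ (q - 1) : ℝ) : ℂ) := by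
    refine setIntegral_congr_fun measurableSet_Ioo fun x hx => ?_
    rw [Complex.ofReal_mul, Complex.ofReal_cpow hx.1.le, Complex.ofReal_cpow (by linarith [hx.2])]
    push_cast; rfl
  rw [this, integral_complex_ofReal, Complex.ofReal_re]

lemma agmJ_lem : agmJ (√2) 1 = Gamma (1/4) * Gamma (1/2) / Gamma (3/4) / 2 := by
  have hinj : InjOn (fun t : ℝ => ((1 + t^2)^2)⁻¹) (Ioi 0) := by
    intro t ht s hs h
    simp only [mem_Ioi] at ht hs h
    have h1 := inv_injective h
    have h2 := (pow_left_inj₀ (by positivity) (by positivity) two_ne_zero).1 h1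
    have h3 : t^2 = s^2 := by linarith
    exact (pow_left_inj₀ ht.le hs.le two_ne_zero).1 h3
  have himg : (fun t : ℝ => ((1 + t^2)^2)⁻¹) '' Ioi 0 = Ioo 0 1 := by
    ext w
    constructor
    · rintro ⟨t, ht, rfl⟩
      have ht : 0 < t := ht
      refine ⟨by positivity, inv_lt_one_of_one_lt₀ ?_⟩
      nlinarith [pow_pos ht 2]
    · rintro ⟨h0, h1⟩
      have h2 : 1 < √(w⁻¹) := by
        rw [Real.lt_sqrt (by norm_num)]; simpa using (one_lt_inv₀ h0).2 h1
      refine ⟨√(√(w⁻¹) - 1), Real.sqrt_pos.2 (by linarith), ?_⟩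
      simp only
      rw [Real.sq_sqrt (by linarith), add_sub_cancel, Real.sq_sqrt (by positivity), inv_inv]
  have hder : ∀ x ∈ Ioi (0:ℝ), HasDerivWithinAt (fun t : ℝ => ((1 + t^2)^2)⁻¹)
      (-(4 * x / (1 + x^2)^3)) (Ioi 0) x := by
    intro x hx
    have hx : 0 < x := hx
    have h1 := ((((hasDerivAt_pow 2 x).const_add 1).pow 2).inv (by simp only [Pi.pow_apply]; positivity))
    refine HasDerivAt.hasDerivWithinAt ?_
    convert! h1 using 1
    simp
    field_simp
    ring
  have key := integral_image_eq_integral_abs_deriv_smul measurableSet_Ioi hder hinj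
    (fun x => x ^ ((1/4:ℝ) - 1) * (1 - x) ^ ((1/2:ℝ) - 1))
  rw [himg, beta_real (by norm_num) (by norm_num), show (1/4:ℝ) + 1/2 = 3/4 by norm_num] at key
  rw [key, agmJ_half, ← integral_const_mul, ← integral_div]
  refine setIntegral_congr_fun measurableSet_Ioi fun t ht => ?_
  have ht : 0 < t := ht
  simp only [smul_eq_mul]
  rw [abs_neg, abs_of_pos (by positivity), Real.sq_sqrt (by norm_num)]
  have e1 : (((1 + t^2)^2)⁻¹ : ℝ) ^ ((1/4:ℝ) - 1) = (1+t^2) * √(1+t^2) := by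
    rw [Real.inv_rpow (by positivity), ← Real.rpow_neg (by positivity), ← Real.rpow_natCast,
      ← Real.rpow_mul (by positivity), Real.sqrt_eq_rpow]
    nth_rw 2 [← Real.rpow_one (1+t^2)]
    rw [← Real.rpow_add (by positivity)]
    norm_num
  have e2 : (1 - ((1 + t^2)^2)⁻¹ : ℝ) ^ ((1/2:ℝ) - 1) = (1 + t^2) / (t * √(t^2+2)) := by
    have : (1 - ((1 + t^2)^2)⁻¹ : ℝ) = (t / (1+t^2))^2 * (t^2+2) := by field_simp; ring
    rw [this, show (1/2:ℝ) - 1 = -(1/2) by norm_num, Real.rpow_neg (by positivity),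
      ← Real.sqrt_eq_rpow, Real.sqrt_mul (by positivity), Real.sqrt_sq (by positivity)]
    field_simp
  rw [e1, e2, Real.sqrt_mul (by positivity), one_pow, add_comm (t^2) 1]
  have h1 : 0 < √(1 + t^2) := by positivity
  have h2 : 0 < √(t^2+2) := by positivity
  have h3 : √(1 + t^2) ^ 2 = 1 + t^2 := Real.sq_sqrt (by positivity)
  field_simp
  rw [h3]; ring

lemma theta4_ne (n : ℕ) : theta4 (2 ^ n) ≠ 0 := by
  induction n with
  | zero =>
    intro h
    have h1 := theta4_one
    rw [pow_zero] at h
    rw [h] at h1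
    have := theta_pos one_pos
    nlinarith [pow_pos this 2]
  | succ n ih =>
    intro h
    have h1 := theta4_mul (t := 2 ^ n) (by positivity)
    rw [← pow_succ', h] at h1
    have h2 := theta_pos (t := 2 ^ n) (by positivity)
    have := mul_ne_zero h2.ne' ih
    simp [h1] at this

lemma agmJ_theta (n : ℕ) :
    agmJ (theta (2 ^ n) ^ 2) (theta4 (2 ^ n) ^ 2) = agmJ (theta 1 ^ 2) (theta4 1 ^ 2) := by
  induction n with
  | zero => simp
  | succ n ih =>
    rw [← ih, pow_succ' (2:ℝ) n]
    have h2 := theta_pos (t := 2 ^ n) (by positivity)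
    have h3 := theta4_ne n
    refine agmJ_landen (by positivity) (by positivity) ?_ ?_
    · rw [theta4_add (by positivity)]; ring
    · rw [← theta4_mul (by positivity)]; ring

lemma agmJ_theta_one : agmJ (theta 1 ^ 2) (theta4 1 ^ 2) = π := by
  have hp : Tendsto (fun n : ℕ => (2:ℝ) ^ n) atTop atTop :=
    tendsto_pow_atTop_atTop_of_one_lt (by norm_num)
  have h1 : Tendsto (fun n : ℕ => theta (2 ^ n)) atTop (𝓝 1) := theta_tendsto.comp hp
  have h2 : Tendsto (fun n : ℕ => theta (4 * 2 ^ n)) atTop (𝓝 1) :=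
    theta_tendsto.comp (hp.const_mul_atTop (by norm_num))
  have h3 : Tendsto (fun n : ℕ => theta4 (2 ^ n)) atTop (𝓝 1) := by
    have := (h2.const_mul 2).sub h1
    norm_num at this
    exact this
  have h4 := agmJ_tendsto (by simpa using h1.pow 2) (by simpa using h3.pow 2)
  simp only [agmJ_theta] at h4
  exact tendsto_nhds_unique tendsto_const_nhds h4

/-- `θ(1) = π^{1/4}/Γ(3/4)`. -/
theorem theta_one : theta 1 = Real.pi ^ ((1 : ℝ)/4) / Real.Gamma (3/4) := by
  have h1 := agmJ_theta_one
  have hb0 : theta4 1 ≠ 0 := by simpa using theta4_ne 0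
  have hb : 0 < theta4 1 ^ 2 := by positivity
  have h2 := agmJ_mul hb (√2) 1
  rw [mul_one, mul_comm, ← theta4_one, h1, agmJ_lem, Real.Gamma_one_half_eq] at h2
  have hG := Real.Gamma_mul_Gamma_one_sub (1/4)
  rw [show (1:ℝ) - 1/4 = 3/4 by norm_num, show π * (1/4) = π / 4 by ring, Real.sin_pi_div_four] at hG
  have g3 : 0 < Gamma (3/4) := Real.Gamma_pos_of_pos (by norm_num)
  have hs2 : √2 ^ 2 = (2:ℝ) := Real.sq_sqrt (by norm_num)
  have hsp : √π ^ 2 = π := Real.sq_sqrt pi_pos.le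
  have hsp0 : 0 < √π := Real.sqrt_pos.2 pi_pos
  have hs20 : 0 < √2 := by positivity
  have hG' : Gamma (1/4) = √π ^ 2 * √2 / Gamma (3/4) := by
    rw [hsp, eq_div_iff g3.ne', hG]
    field_simp
    linarith
  have h3 : theta 1 ^ 2 = √π / Gamma (3/4) ^ 2 := by
    rw [theta4_one]
    rw [hG', ← hsp] at h2
    field_simp at h2 ⊢
    rw [Real.sqrt_sq hsp0.le] at h2
    refine mul_left_cancel₀ (show √π ^ 2 * 2 ≠ 0 by positivity) ?_
    linear_combination √2 * h2 + √π ^ 3 * hs2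
  have h4 : (π ^ ((1:ℝ)/4)) ^ 2 = √π := by
    rw [← Real.rpow_natCast, ← Real.rpow_mul pi_pos.le, Real.sqrt_eq_rpow]; norm_num
  refine (pow_left_inj₀ (theta_pos one_pos).le (by positivity) two_ne_zero).1 ?_
  rw [h3, div_pow, h4]
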